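/- For every integer k ≥ 3, the graph S^+_k − w_4, where S^+_k is obtained with the case-c neighbourhood of w^+, is isomorphic to an induced subgraph of J_k − z_g, where g = (k−1)(k+1). -/

import Mathlib

/-- The `k`-path power on `n` vertices (0-indexed: vertex `i : Fin n` represents
vertex `i+1`): distinct vertices are adjacent iff their indices differ by at most `k`. -/
def pathPower (k n : ℕ) : SimpleGraph (Fin n) :=
  SimpleGraph.fromRel (fun i j => |(i.val : ℤ) - (j.val : ℤ)| ≤ k)

/-- `G - x`: the induced subgraph of `G` on all vertices other than `x`. -/
def deleteVert {V : Type*} (G : SimpleGraph V) (x : V) : SimpleGraph {y : V // y ∈ {y : V | y ≠ x}} :=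
  G.induce {y : V | y ≠ x}

/-- The graph `J_k`: the `k`-path power on `(2k-1)(k+1)+1` vertices. -/
def Jgraph (k : ℕ) : SimpleGraph (Fin ((2 * k - 1) * (k + 1) + 1)) :=
  pathPower k ((2 * k - 1) * (k + 1) + 1)

/-- Vertices of the graph `S^+_k` (with `n = (k-1)(k+1)+2` path-power vertices):
`v i` represents `v_{i+1}`, together with `w_1, w_2, w_3, w_4` and `w^+`. -/
inductive SPVert (n : ℕ) where
  | v (i : Fin n)
  | w1 | w2 | w3 | w4
  | wp

/-- The graph `S^+_k` on path-power part of size `n`, where the neighbourhood of the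
extra vertex `w^+` is the set `A`:  the vertices `v_1, …, v_n` induce a `k`-path power,
with the additional edges `w_1w_2`, `w_2v_1`, `v_nw_3`, `w_3w_4`, and `w^+` joined to `A`. -/
def SPlusGraph (k n : ℕ) (A : Set (SPVert n)) : SimpleGraph (SPVert n) :=
  SimpleGraph.fromRel (fun x y =>
    (∃ i j : Fin n, x = .v i ∧ y = .v j ∧ |(i.val : ℤ) - (j.val : ℤ)| ≤ k) ∨
    (x = .w1 ∧ y = .w2) ∨
    (∃ i : Fin n, x = .w2 ∧ y = .v i ∧ i.val = 0) ∨
    (∃ i : Fin n, x = .v i ∧ i.val = n - 1 ∧ y = .w3) ∨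
    (x = .w3 ∧ y = .w4) ∨
    (x = .wp ∧ y ∈ A))

/-- Case-a neighbourhood of `w^+`: `{w_1, w_2, v_1, …, v_k}`. -/
def caseA (k n : ℕ) : Set (SPVert n) :=
  {x | x = .w1 ∨ x = .w2 ∨ ∃ i : Fin n, x = .v i ∧ i.val < k}

/-- Case-b neighbourhood of `w^+`: `{v_{n-k+1}, …, v_n, w_3, w_4}`. -/
def caseB (k n : ℕ) : Set (SPVert n) :=
  {x | x = .w3 ∨ x = .w4 ∨ ∃ i : Fin n, x = .v i ∧ n - k ≤ i.val}

/-- Case-c neighbourhood of `w^+`: `{w_1, w_2, v_1, …, v_{k-1}}`. -/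
def caseC (k n : ℕ) : Set (SPVert n) :=
  {x | x = .w1 ∨ x = .w2 ∨ ∃ i : Fin n, x = .v i ∧ i.val < k - 1}

/-- Case-d neighbourhood of `w^+`: `{v_{n-k+2}, …, v_n, w_3, w_4}`. -/
def caseD (k n : ℕ) : Set (SPVert n) :=
  {x | x = .w3 ∨ x = .w4 ∨ ∃ i : Fin n, x = .v i ∧ n - k + 1 ≤ i.val}

/-!
Place the vertices of `S^+_k` on the integer line, with adjacency meaning distance at most `k`.
Put `v_1, …, v_n` at `1, …, n`. Then `w_2` has to sit at distance `k` to the left of `v_1` and `w_1`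
just beyond it, while `w_3` and `w_4` continue to the right in steps of `k`. Finally `w^+`, at
distance at most `k` from `v_{k-1}` but not from `v_k`, has to sit at `-1`, so the point `0` stays
free and can be the vertex deleted from `J_k`. Without `w_4` everything lies in `[-k, n + k]`, and
this window around `z_g` exactly reaches the right end of `J_k`.
-/

/-- The `k`-th power of the two-way infinite path: the line on which the vertices of path powers and
of `S^+_k` are placed before being cut down to a finite window. -/
def intPathPower (k : ℕ) : SimpleGraph ℤ :=
  SimpleGraph.fromRel (fun i j => |i - j| ≤ k)

theorem intPathPower_adj {k : ℕ} {i j : ℤ} :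
    (intPathPower k).Adj i j ↔ i ≠ j ∧ |i - j| ≤ k := by
  rw [intPathPower, SimpleGraph.fromRel_adj, abs_sub_comm j i, or_self]

theorem pathPower_adj {k n : ℕ} {i j : Fin n} :
    (pathPower k n).Adj i j ↔ (intPathPower k).Adj i j := by
  rw [pathPower, SimpleGraph.fromRel_adj, intPathPower_adj, abs_sub_comm (j : ℤ) i, or_self,
    ne_eq, ne_eq, Nat.cast_inj, Fin.ext_iff]

theorem intPathPower_adj_add_left {k : ℕ} {i j : ℤ} (a : ℤ) :
    (intPathPower k).Adj (a + i) (a + j) ↔ (intPathPower k).Adj i j := by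
  simp only [intPathPower_adj, ne_eq, add_right_inj, add_sub_add_left_eq_sub]

theorem nonempty_embedding_deleteVert_pathPower {V : Type*} {H : SimpleGraph V} {k N : ℕ}
    (f : H ↪g intPathPower k) (c : Fin N) (f_ne_zero : ∀ x, f x ≠ 0)
    (f_mem_window : ∀ x, f x ∈ Set.Ico (-(c : ℤ)) (N - c)) :
    Nonempty (H ↪g deleteVert (pathPower k N) c) := by
  have exists_index (x : V) : ∃ i : Fin N, (i : ℤ) = c + f x := by
    obtain ⟨lower, upper⟩ := f_mem_window x
    exact ⟨⟨(c + f x).toNat, by omega⟩, Int.toNat_of_nonneg (by omega)⟩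
  choose index index_eq using exists_index
  have index_ne (x : V) : index x ≠ c := by
    intro h
    have := h ▸ index_eq x
    exact f_ne_zero x (by omega)
  refine ⟨⟨⟨fun x => ⟨index x, index_ne x⟩, fun x y hxy => f.injective ?_⟩, fun {x y} => ?_⟩⟩
  · have index_eq_index : index x = index y := congrArg Subtype.val hxy
    exact add_left_cancel <| (index_eq x).symm.trans (index_eq_index ▸ index_eq y)
  · calc (pathPower k N).Adj (index x) (index y)
      _ ↔ (intPathPower k).Adj (c + f x) (c + f y) := by rw [pathPower_adj, index_eq, index_eq]
      _ ↔ (intPathPower k).Adj (f x) (f y) := intPathPower_adj_add_left _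
      _ ↔ H.Adj x y := f.map_adj_iff

namespace SPVert

/-- The point of the integer line at which a vertex of `S^+_k`, with the case-c neighbourhood of
`w^+`, is placed. The `0`-based `v i` goes to `i + 1`, which leaves `0` for the deleted vertex. -/
def position (k : ℕ) {n : ℕ} : SPVert n → ℤ
  | v i => i + 1
  | w1 => -k
  | w2 => 1 - k
  | w3 => n + k
  | w4 => n + 2 * k
  | wp => -1

variable {k n : ℕ}

theorem position_ne_zero (hk : 2 ≤ k) (x : SPVert n) : x.position k ≠ 0 := by
  cases x <;> simp only [position] <;> omega

theorem position_injective (hk : 3 ≤ k) :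
    Function.Injective (position k : SPVert n → ℤ) := by
  intro x y h
  cases x <;> cases y <;>
    simp only [position, v.injEq, Fin.ext_iff, reduceCtorEq] at h ⊢ <;> omega

theorem position_mem_Icc {x : SPVert n} (hk : 1 ≤ k) (hx : x ≠ w4) :
    x.position k ∈ Set.Icc (-k : ℤ) (n + k) := by
  cases x <;> simp only [position, Set.mem_Icc, ne_eq, not_true_eq_false] at hx ⊢ <;> omega

theorem mem_caseC {y : SPVert n} :
    y ∈ caseC k n ↔ y = w1 ∨ y = w2 ∨ ∃ i : Fin n, y = v i ∧ (i : ℕ) < k - 1 :=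
  Iff.rfl

end SPVert

namespace SPlusGraph

open SPVert

variable {k n : ℕ} {A : Set (SPVert n)} {y : SPVert n}

theorem adj_v {i : Fin n} :
    (SPlusGraph k n A).Adj (v i) y ↔
      (∃ j : Fin n, y = v j ∧ i ≠ j ∧ |(i : ℤ) - j| ≤ k) ∨ (y = w2 ∧ (i : ℕ) = 0) ∨
        (y = w3 ∧ (i : ℕ) = n - 1) ∨ (y = wp ∧ v i ∈ A) := by
  cases y <;> simp [SPlusGraph, abs_sub_comm]

theorem adj_w1 : (SPlusGraph k n A).Adj w1 y ↔ y = w2 ∨ (y = wp ∧ w1 ∈ A) := by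
  cases y <;> simp [SPlusGraph]

theorem adj_w2 :
    (SPlusGraph k n A).Adj w2 y ↔
      y = w1 ∨ (∃ i : Fin n, y = v i ∧ (i : ℕ) = 0) ∨ (y = wp ∧ w2 ∈ A) := by
  cases y <;> simp [SPlusGraph]

theorem adj_w3 :
    (SPlusGraph k n A).Adj w3 y ↔
      y = w4 ∨ (∃ i : Fin n, y = v i ∧ (i : ℕ) = n - 1) ∨ (y = wp ∧ w3 ∈ A) := by
  cases y <;> simp [SPlusGraph]

theorem adj_w4 : (SPlusGraph k n A).Adj w4 y ↔ y = w3 ∨ (y = wp ∧ w4 ∈ A) := by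
  cases y <;> simp [SPlusGraph]

theorem adj_wp : (SPlusGraph k n A).Adj wp y ↔ y ≠ wp ∧ y ∈ A := by
  cases y <;> simp [SPlusGraph]

theorem caseC_adj_iff_intPathPower_adj_position (hk : 3 ≤ k) {x : SPVert n} :
    (SPlusGraph k n (caseC k n)).Adj x y ↔
      (intPathPower k).Adj (x.position k) (y.position k) := by
  rw [intPathPower_adj]
  cases x with
  | v i => rw [adj_v]; cases y <;> grind [position, mem_caseC]
  | w1 => rw [adj_w1]; cases y <;> grind [position, mem_caseC]
  | w2 => rw [adj_w2]; cases y <;> grind [position, mem_caseC]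
  | w3 => rw [adj_w3]; cases y <;> grind [position, mem_caseC]
  | w4 => rw [adj_w4]; cases y <;> grind [position, mem_caseC]
  | wp => rw [adj_wp]; cases y <;> grind [position, mem_caseC]

/-- The placement of `S^+_k` on the integer line, for the case-c neighbourhood of `w^+`, as an
induced subgraph of the two-way infinite path power. -/
def caseCEmbedding (hk : 3 ≤ k) : SPlusGraph k n (caseC k n) ↪g intPathPower k where
  toFun := position k
  inj' := position_injective hk
  map_rel_iff' := (caseC_adj_iff_intPathPower_adj_position hk).symm

end SPlusGraph

theorem SPlusC_minus_w4_embeds_general {k n N : ℕ} (hk : 3 ≤ k) (c : Fin N)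
    (hleft : k ≤ (c : ℕ)) (hright : c + n + k < N) :
    Nonempty (deleteVert (SPlusGraph k n (caseC k n)) SPVert.w4 ↪g
      deleteVert (pathPower k N) c) := by
  refine nonempty_embedding_deleteVert_pathPower
    ((SPlusGraph.caseCEmbedding hk).comp (SimpleGraph.Embedding.induce _)) c
    (fun x => SPVert.position_ne_zero (by omega) x.1) fun x => ?_
  have window_subset : Set.Icc (-k : ℤ) (n + k) ⊆ Set.Ico (-(c : ℤ)) (N - c) :=
    Set.Icc_subset_Ico_iff (by omega) |>.mpr ⟨by omega, by omega⟩
  exact window_subset (SPVert.position_mem_Icc (by omega) x.2)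

theorem le_index_zg {k : ℕ} (hk : 2 ≤ k) : k ≤ (k - 1) * (k + 1) - 1 :=
  Nat.le_sub_one_of_lt (Nat.le_mul_of_pos_left (k + 1) (by omega))

theorem index_zg_add_window_eq {k : ℕ} (hk : 2 ≤ k) :
    ((k - 1) * (k + 1) - 1) + ((k - 1) * (k + 1) + 2) + k = (2 * k - 1) * (k + 1) := by
  have hindex := le_index_zg hk
  zify [show 1 ≤ k by omega, show 1 ≤ 2 * k by omega, show 1 ≤ (k - 1) * (k + 1) by omega]
  ring

/-- For `k ≥ 3` (with `n = (k-1)(k+1)+2` and `g = (k-1)(k+1)`), the graph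
`S^+_k - w_4`, where `S^+_k` is obtained with the case-c neighbourhood of `w^+`,
is isomorphic to an induced subgraph of `J_k - z_g`
(`zg` has 0-based index `g - 1`). -/
theorem SPlusC_minus_w4_embeds (k : ℕ) (hk : 3 ≤ k)
    (zg : Fin ((2 * k - 1) * (k + 1) + 1)) (hzg : (zg : ℕ) = (k - 1) * (k + 1) - 1) :
    Nonempty (deleteVert (SPlusGraph k ((k - 1) * (k + 1) + 2)
        (caseC k ((k - 1) * (k + 1) + 2))) SPVert.w4 ↪g deleteVert (Jgraph k) zg) := by
  have hright := index_zg_add_window_eq (show 2 ≤ k by omega)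
  exact SPlusC_minus_w4_embeds_general hk zg (hzg ▸ le_index_zg (by omega)) (by omega)
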